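/- Let F be a finite field of odd cardinality q and let k ∈ ℕ. For a tuple (a₁, a₂, a₃, a₄, a₆) ∈ F⁵ with nonzero discriminant, let N denote the number of points of the corresponding Weierstrass curve over F, i.e., the number of affine solutions (x,y) ∈ F² of y² + a₁xy + a₃y = x³ + a₂x² + a₄x + a₆ plus one for the point at infinity. Then the sum of (q + 1 - N)^{2k+1} over all tuples (a₁, a₂, a₃, a₄, a₆) ∈ F⁵ with nonzero discriminant equals 0. -/

import Mathlib

/-- The number of points of the Weierstrass curve
`y² + a₁xy + a₃y = x³ + a₂x² + a₄x + a₆` over the finite field `F`: the number of affine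
solutions `(x, y) ∈ F²` plus one for the point at infinity. -/
def weierstrassPointCount (F : Type*) [Field F] [Fintype F] [DecidableEq F]
    (a₁ a₂ a₃ a₄ a₆ : F) : ℕ :=
  (Finset.univ.filter (fun p : F × F =>
      p.2 ^ 2 + a₁ * p.1 * p.2 + a₃ * p.2 =
        p.1 ^ 3 + a₂ * p.1 ^ 2 + a₄ * p.1 + a₆)).card + 1

/-!
Over a finite field some `e` is not of the form `t² + t`, and then the norm form
`u² + uv - ev²` of the corresponding quadratic extension has no nontrivial zero. The quadratic
twist by this extension has the same discriminant up to the unit `(1 + 4e)⁶`. Writing the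
fibre of the curve over `x` as `y² + Ay = B`, the fibre of the twist over `(1 + 4e)x` is
`z² + d²Az = d³(B - eA²)` with `d = 1 + 4e`. A common pair of solutions `y`, `z` gives a zero of the
norm form, so the two fibres together have at most two points; for fixed `A` they have two on
average over `B`, hence exactly two. Twisting therefore negates the trace of Frobenius, and since it
permutes the Weierstrass equations, an odd moment equals its own negative. Taking `t² + t`
in place of `t²` makes the argument uniform in the characteristic.
-/

open scoped Finset

section QuadraticSolutions

variable {R : Type*} [CommRing R] [Fintype R] [DecidableEq R]

/-- The solutions `y` of `y² + Ay = B`. The fibre of a Weierstrass curve over a given `x` has this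
form. -/
def quadraticSolutions (A B : R) : Finset R := {y | y ^ 2 + A * y = B}

theorem mem_quadraticSolutions {A B y : R} :
    y ∈ quadraticSolutions A B ↔ y ^ 2 + A * y = B := by
  simp [quadraticSolutions]

theorem sum_card_quadraticSolutions (A : R) :
    ∑ B, #(quadraticSolutions A B) = Fintype.card R :=
  (Finset.card_eq_sum_card_fiberwise fun _ _ => Finset.mem_univ _).symm

theorem card_quadraticSolutions_le_two [IsDomain R] (A B : R) : #(quadraticSolutions A B) ≤ 2 := by
  obtain h | ⟨y, hy⟩ := (quadraticSolutions A B).eq_empty_or_nonempty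
  · simp [h]
  · refine (Finset.card_le_card (t := {y, -A - y}) fun z hz => ?_).trans Finset.card_le_two
    rw [mem_quadraticSolutions] at hy hz
    have factored : (z - y) * (z - (-A - y)) = 0 := by linear_combination hz - hy
    simpa [sub_eq_zero] using factored

end QuadraticSolutions

section NormForm

variable {F : Type*} [Field F] {e : F}

variable (F) in
theorem exists_forall_sq_add_self_ne [Finite F] : ∃ e : F, ∀ t : F, t ^ 2 + t ≠ e := by
  have not_injective : ¬ Function.Injective fun t : F => t ^ 2 + t := fun h =>
    neg_ne_zero.mpr one_ne_zero (h (by ring) : (-1 : F) = 0)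
  simpa [Finite.injective_iff_surjective, Function.Surjective] using not_injective

theorem eq_zero_and_eq_zero_of_sq_add_mul_sub_eq_zero (he : ∀ t : F, t ^ 2 + t ≠ e) {u v : F}
    (h : u ^ 2 + u * v - e * v ^ 2 = 0) : u = 0 ∧ v = 0 := by
  obtain rfl : v = 0 := by
    by_contra hv
    refine he (u / v) ?_
    field_simp
    linear_combination h
  exact ⟨by simpa using h, rfl⟩

theorem one_add_four_mul_ne_zero (he : ∀ t : F, t ^ 2 + t ≠ e) : 1 + 4 * e ≠ 0 := fun h =>
  one_ne_zero (eq_zero_and_eq_zero_of_sq_add_mul_sub_eq_zero he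
    (u := 1) (v := -2) (by linear_combination -h)).1

variable [Fintype F] [DecidableEq F]

theorem eq_of_mem_quadraticSolutions_twist (he : ∀ t : F, t ^ 2 + t ≠ e) {A B y z : F}
    (hy : y ∈ quadraticSolutions A B)
    (hz : z ∈ quadraticSolutions ((1 + 4 * e) ^ 2 * A) ((1 + 4 * e) ^ 3 * (B - e * A ^ 2))) :
    (1 + 4 * e) ^ 2 * y = z := by
  rw [mem_quadraticSolutions] at hy hz
  refine sub_eq_zero.mp (eq_zero_and_eq_zero_of_sq_add_mul_sub_eq_zero he
    (u := (1 + 4 * e) ^ 2 * y - z) (v := (1 + 4 * e) ^ 2 * A + 2 * z) ?_).1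
  linear_combination (1 + 4 * e) ^ 4 * hy - (1 + 4 * e) * hz

theorem card_quadraticSolutions_add_card_twist_le_two (he : ∀ t : F, t ^ 2 + t ≠ e) (A B : F) :
    #(quadraticSolutions A B) +
      #(quadraticSolutions ((1 + 4 * e) ^ 2 * A) ((1 + 4 * e) ^ 3 * (B - e * A ^ 2))) ≤ 2 := by
  set S := quadraticSolutions A B
  set T := quadraticSolutions ((1 + 4 * e) ^ 2 * A) ((1 + 4 * e) ^ 3 * (B - e * A ^ 2))
  have hST {y z : F} (hy : y ∈ S) (hz : z ∈ T) : (1 + 4 * e) ^ 2 * y = z :=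
    eq_of_mem_quadraticSolutions_twist he hy hz
  obtain hS | ⟨y, hy⟩ := S.eq_empty_or_nonempty
  · simpa [hS] using card_quadraticSolutions_le_two _ _
  obtain hT | ⟨z, hz⟩ := T.eq_empty_or_nonempty
  · simpa [hT] using card_quadraticSolutions_le_two _ _
  have hd : (1 + 4 * e) ^ 2 ≠ 0 := pow_ne_zero 2 (one_add_four_mul_ne_zero he)
  have hS : #S ≤ 1 := Finset.card_le_one.mpr fun _ h₁ _ h₂ =>
    mul_left_cancel₀ hd ((hST h₁ hz).trans (hST h₂ hz).symm)
  have hT : #T ≤ 1 := Finset.card_le_one.mpr fun _ h₁ _ h₂ => (hST hy h₁).symm.trans (hST hy h₂)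
  lia

theorem card_quadraticSolutions_add_card_twist (he : ∀ t : F, t ^ 2 + t ≠ e) (A B : F) :
    #(quadraticSolutions A B) +
      #(quadraticSolutions ((1 + 4 * e) ^ 2 * A) ((1 + 4 * e) ^ 3 * (B - e * A ^ 2))) = 2 := by
  have hd : (1 + 4 * e) ^ 3 ≠ 0 := pow_ne_zero 3 (one_add_four_mul_ne_zero he)
  have bijective : Function.Bijective fun B => (1 + 4 * e) ^ 3 * (B - e * A ^ 2) :=
    (mulLeft_bijective₀ _ hd).comp (Equiv.subRight (e * A ^ 2)).bijective
  refine (Finset.sum_eq_sum_iff_of_le fun B _ =>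
    card_quadraticSolutions_add_card_twist_le_two he A B).mp ?_ B (Finset.mem_univ B)
  rw [Finset.sum_add_distrib, sum_card_quadraticSolutions,
    bijective.sum_comp fun C => #(quadraticSolutions ((1 + 4 * e) ^ 2 * A) C),
    sum_card_quadraticSolutions]
  simp [mul_two]

end NormForm

section QuadraticTwist

variable {R : Type*} [CommRing R]

/-- The quadratic twist of a Weierstrass curve by the extension generated by a root of
`t² + t = e`. The model is chosen so that its fibre over `(1 + 4e)x` depends only on
the coefficients of the quadratic equation in `y` defining the fibre of `W` over `x`. -/
def quadraticTwist (e : R) (W : WeierstrassCurve R) : WeierstrassCurve R where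
  a₁ := (1 + 4 * e) * W.a₁
  a₂ := (1 + 4 * e) * (W.a₂ - e * W.a₁ ^ 2)
  a₃ := (1 + 4 * e) ^ 2 * W.a₃
  a₄ := (1 + 4 * e) ^ 2 * (W.a₄ - 2 * e * W.a₁ * W.a₃)
  a₆ := (1 + 4 * e) ^ 3 * (W.a₆ - e * W.a₃ ^ 2)

theorem quadraticTwist_Δ (e : R) (W : WeierstrassCurve R) :
    (quadraticTwist e W).Δ = (1 + 4 * e) ^ 6 * W.Δ := by
  simp only [quadraticTwist, WeierstrassCurve.Δ, WeierstrassCurve.b₂, WeierstrassCurve.b₄,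
    WeierstrassCurve.b₆, WeierstrassCurve.b₈]
  ring

theorem quadraticTwist_zero (W : WeierstrassCurve R) : quadraticTwist 0 W = W := by
  ext <;> simp [quadraticTwist]

theorem quadraticTwist_quadraticTwist (e e' : R) (W : WeierstrassCurve R) :
    quadraticTwist e (quadraticTwist e' W) = quadraticTwist (e + e' + 4 * e * e') W := by
  ext <;> simp only [quadraticTwist] <;> ring

theorem quadraticTwist_bijective {e : R} (he : IsUnit (1 + 4 * e)) :
    Function.Bijective (quadraticTwist e) := by
  obtain ⟨c, hc⟩ := he.exists_right_inv
  refine Function.bijective_iff_has_inverse.mpr ⟨quadraticTwist (-e * c), fun W => ?_, fun W => ?_⟩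
  · rw [quadraticTwist_quadraticTwist,
      show -e * c + e + 4 * (-e * c) * e = 0 by linear_combination -e * hc, quadraticTwist_zero]
  · rw [quadraticTwist_quadraticTwist,
      show e + -e * c + 4 * e * (-e * c) = 0 by linear_combination -e * hc, quadraticTwist_zero]

end QuadraticTwist

section FrobeniusTrace

variable {F : Type*} [Field F] [Fintype F] [DecidableEq F]

/-- The trace of Frobenius `q + 1 - N` of a Weierstrass curve over a field with `q` elements. -/
def frobeniusTrace (W : WeierstrassCurve F) : ℤ :=
  Fintype.card F + 1 - weierstrassPointCount F W.a₁ W.a₂ W.a₃ W.a₄ W.a₆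

theorem weierstrassPointCount_eq_sum (a₁ a₂ a₃ a₄ a₆ : F) :
    weierstrassPointCount F a₁ a₂ a₃ a₄ a₆ =
      ∑ x, #(quadraticSolutions (a₁ * x + a₃) (x ^ 3 + a₂ * x ^ 2 + a₄ * x + a₆)) + 1 := by
  simp only [weierstrassPointCount, quadraticSolutions, Finset.card_filter,
    Fintype.sum_prod_type, add_mul, add_assoc]

theorem frobeniusTrace_eq_sum (W : WeierstrassCurve F) :
    frobeniusTrace W = ∑ x, (1 - #(quadraticSolutions (W.a₁ * x + W.a₃)
      (x ^ 3 + W.a₂ * x ^ 2 + W.a₄ * x + W.a₆)) : ℤ) := by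
  simp [frobeniusTrace, weierstrassPointCount_eq_sum]

theorem frobeniusTrace_quadraticTwist {e : F} (he : ∀ t : F, t ^ 2 + t ≠ e)
    (W : WeierstrassCurve F) : frobeniusTrace (quadraticTwist e W) = -frobeniusTrace W := by
  rw [frobeniusTrace_eq_sum, frobeniusTrace_eq_sum, ← Finset.sum_neg_distrib,
    ← (mulLeft_bijective₀ _ (one_add_four_mul_ne_zero he)).sum_comp]
  refine Finset.sum_congr rfl fun x _ => ?_
  have linear_coeff : (quadraticTwist e W).a₁ * ((1 + 4 * e) * x) + (quadraticTwist e W).a₃ =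
      (1 + 4 * e) ^ 2 * (W.a₁ * x + W.a₃) := by
    simp only [quadraticTwist]
    ring
  have cubic : ((1 + 4 * e) * x) ^ 3 + (quadraticTwist e W).a₂ * ((1 + 4 * e) * x) ^ 2 +
      (quadraticTwist e W).a₄ * ((1 + 4 * e) * x) + (quadraticTwist e W).a₆ =
      (1 + 4 * e) ^ 3 *
        (x ^ 3 + W.a₂ * x ^ 2 + W.a₄ * x + W.a₆ - e * (W.a₁ * x + W.a₃) ^ 2) := by
    simp only [quadraticTwist]
    ring
  have card_add_card := card_quadraticSolutions_add_card_twist he (W.a₁ * x + W.a₃)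
    (x ^ 3 + W.a₂ * x ^ 2 + W.a₄ * x + W.a₆)
  rw [linear_coeff, cubic]
  lia

end FrobeniusTrace

/-- The tuple `(a₁, a₂, a₃, a₄, a₆)` of coefficients of a Weierstrass curve. -/
def weierstrassCoefficients (R : Type*) : WeierstrassCurve R ≃ R × R × R × R × R where
  toFun W := (W.a₁, W.a₂, W.a₃, W.a₄, W.a₆)
  invFun v := ⟨v.1, v.2.1, v.2.2.1, v.2.2.2.1, v.2.2.2.2⟩

instance (R : Type*) [Fintype R] : Fintype (WeierstrassCurve R) :=
  Fintype.ofEquiv _ (weierstrassCoefficients R).symm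

theorem weierstrass_odd_moments_vanish_general (F : Type*) [Field F] [Fintype F] [DecidableEq F]
    {n : ℕ} (hn : Odd n) : ∑ W : WeierstrassCurve F with W.Δ ≠ 0, frobeniusTrace W ^ n = 0 := by
  obtain ⟨e, he⟩ := exists_forall_sq_add_self_ne F
  have hd : 1 + 4 * e ≠ 0 := one_add_four_mul_ne_zero he
  refine self_eq_neg.mp ?_
  calc
    _ = ∑ W : WeierstrassCurve F with W.Δ ≠ 0, frobeniusTrace (quadraticTwist e W) ^ n :=
      (Finset.sum_bijective _ (quadraticTwist_bijective hd.isUnit)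
        (by simp [quadraticTwist_Δ, hd]) fun _ _ => rfl).symm
    _ = _ := by simp only [frobeniusTrace_quadraticTwist he, hn.neg_pow, Finset.sum_neg_distrib]

/-- Over a finite field of odd cardinality `q`, the odd moments of the trace of Frobenius
vanish: the sum of `(q + 1 - N)^{2k+1}` over all Weierstrass equations with nonzero
discriminant is zero. -/
theorem weierstrass_odd_moments_vanish (F : Type*) [Field F] [Fintype F] [DecidableEq F]
    (hq : Odd (Fintype.card F)) (k : ℕ) :
    ∑ v ∈ Finset.univ.filter (fun v : F × F × F × F × F =>
        (WeierstrassCurve.mk v.1 v.2.1 v.2.2.1 v.2.2.2.1 v.2.2.2.2).Δ ≠ 0),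
      ((Fintype.card F : ℤ) + 1 -
          weierstrassPointCount F v.1 v.2.1 v.2.2.1 v.2.2.2.1 v.2.2.2.2) ^ (2 * k + 1) =
      0 := by
  rw [← weierstrass_odd_moments_vanish_general F (odd_two_mul_add_one k)]
  exact Finset.sum_equiv (weierstrassCoefficients F).symm
    (by simp [weierstrassCoefficients]) fun _ _ => rfl
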